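/- (First-order Stirling series for the Gamma function.) log Γ(y) = (y − 1/2)·log y − y + (1/2)·log(2π) + 1/(12y) + O(y⁻²) as y → ∞; precisely, there exist constants C > 0 and Y₀ > 0 such that for all real y ≥ Y₀, |log Γ(y) − ((y − 1/2)·log y − y + (1/2)·log(2π)) − 1/(12y)| ≤ C/y². -/

import Mathlib

open Real

/-!
Let `μ y = log (Γ y) - ((y - 1/2) log y - y + (1/2) log (2π))`. The functional equation of `Γ` gives

  `μ y - μ (y + 1) = (y + 1/2) log (1 + 1/y) - 1 = ∑_{k ≥ 1} 1 / ((2k + 1) (2y + 1) ^ (2k))`.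

The geometric majorant of this series is `1 / (12 y (y + 1)) = 1 / (12 y) - 1 / (12 (y + 1))`, and
its first two terms dominate `b y - b (y + 1)` for `b y = 1 / (12 y) - 1 / (360 y ^ 3)`. Since
`μ (y + n) → 0` as `n → ∞`, by Euler's limit formula for `Γ` and Stirling's formula for `n!`, both
comparisons telescope to `b y ≤ μ y ≤ 1 / (12 y)` for all `y > 0`.
-/

open Filter
open scoped Nat Topology

/-- The error term `μ` of the leading-order Stirling approximation of `log Γ`, known as Binet's
function. -/
noncomputable def stirlingRemainder (y : ℝ) : ℝ :=
  log (Gamma y) - ((y - 1 / 2) * log y - y + (1 / 2) * log (2 * π))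

lemma le_of_add_one_le_of_tendsto_add_natCast {R α : Type*} [Semiring R] [PartialOrder R]
    [IsOrderedRing R] [TopologicalSpace α] [Preorder α] [OrderClosedTopology α]
    {f : R → α} {y : R} {l : α} (hf : ∀ x, y ≤ x → f (x + 1) ≤ f x)
    (hl : Tendsto (fun n : ℕ => f (y + n)) atTop (𝓝 l)) : l ≤ f y := by
  have hanti : Antitone fun n : ℕ => f (y + n) := antitone_nat_of_succ_le fun n => by
    simpa only [Nat.cast_add_one, add_assoc] using
      hf (y + n) (le_add_of_nonneg_right n.cast_nonneg)
  simpa only [Nat.cast_zero, add_zero] using hanti.le_of_tendsto hl 0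

lemma tendsto_one_div_const_mul_add_natCast_pow {c : ℝ} (hc : 0 < c) (x : ℝ) {k : ℕ}
    (hk : k ≠ 0) : Tendsto (fun n : ℕ => 1 / (c * (x + n) ^ k)) atTop (𝓝 0) :=
  tendsto_const_nhds.div_atTop <| ((tendsto_pow_atTop hk).comp <|
    tendsto_atTop_add_const_left _ x tendsto_natCast_atTop_atTop).const_mul_atTop hc

section LogSeries

variable {y : ℝ}

lemma hasSum_add_half_mul_log_one_add_inv (hy : 0 < y) :
    HasSum (fun k : ℕ => ((1 / (2 * y + 1)) ^ 2) ^ k / (2 * k + 1))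
      ((y + 1 / 2) * log (1 + y⁻¹)) := by
  refine ((hasSum_log_one_add_inv hy).mul_left (y + 1 / 2)).congr_fun fun k => ?_
  have : 2 * y + 1 ≠ 0 := by positivity
  rw [pow_succ _ (2 * k), pow_mul]
  field_simp

lemma le_add_half_mul_log_one_add_inv (hy : 0 < y) :
    1 + 1 / (3 * (2 * y + 1) ^ 2) + 1 / (5 * (2 * y + 1) ^ 4) ≤
      (y + 1 / 2) * log (1 + y⁻¹) := by
  have h := sum_le_hasSum (Finset.range 3) (fun k _ => by positivity)
    (hasSum_add_half_mul_log_one_add_inv hy)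
  refine le_of_eq_of_le ?_ h
  simp only [Finset.sum_range_succ, Finset.sum_range_zero]
  field_simp
  norm_num
  ring

lemma add_half_mul_log_one_add_inv_le (hy : 0 < y) :
    (y + 1 / 2) * log (1 + y⁻¹) ≤ 1 + 1 / (12 * y * (y + 1)) := by
  set r : ℝ := (1 / (2 * y + 1)) ^ 2 with hr
  have one_sub_r : 1 - r = 4 * y * (y + 1) / (2 * y + 1) ^ 2 := by
    rw [hr]; field_simp; ring
  have r_lt_one : r < 1 := sub_pos.1 (one_sub_r ▸ by positivity)
  have tail : HasSum (fun k : ℕ => r ^ (k + 1) / (2 * (k + 1 : ℕ) + 1))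
      ((y + 1 / 2) * log (1 + y⁻¹) - 1) := by
    simpa [hr] using (hasSum_nat_add_iff' 1).2 (hasSum_add_half_mul_log_one_add_inv hy)
  have geometric : HasSum (fun k : ℕ => r / 3 * r ^ k) (r / 3 * (1 - r)⁻¹) :=
    (hasSum_geometric_of_lt_one (by positivity) r_lt_one).mul_left (r / 3)
  have termwise (k : ℕ) : r ^ (k + 1) / (2 * (k + 1 : ℕ) + 1) ≤ r / 3 * r ^ k := by
    rw [div_mul_eq_mul_div, ← pow_succ']
    gcongr
    push_cast
    linarith [(k.cast_nonneg : (0 : ℝ) ≤ k)]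
  have geometric_sum : r / 3 * (1 - r)⁻¹ = 1 / (12 * y * (y + 1)) := by
    rw [one_sub_r, hr]; field_simp; norm_num
  linarith [hasSum_le termwise tail geometric]

end LogSeries

lemma one_div_sub_one_div_cube_decrement_le {y : ℝ} (hy : 0 < y) :
    (1 / (12 * y) - 1 / (360 * y ^ 3)) - (1 / (12 * (y + 1)) - 1 / (360 * (y + 1) ^ 3)) ≤
      1 / (3 * (2 * y + 1) ^ 2) + 1 / (5 * (2 * y + 1) ^ 4) := by
  -- With `t = y (y + 1)`, so that `(2 y + 1) ^ 2 = 4 t + 1`, both sides are rational in `t`.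
  obtain ⟨t, ht⟩ : ∃ t, t = y * (y + 1) := ⟨_, rfl⟩
  have t_pos : 0 < t := ht ▸ by positivity
  have lhs_eq : (1 / (12 * y) - 1 / (360 * y ^ 3)) -
      (1 / (12 * (y + 1)) - 1 / (360 * (y + 1) ^ 3)) =
      (30 * t ^ 2 - 3 * t - 1) / (360 * t ^ 3) := by
    rw [ht]; field_simp; ring
  have rhs_eq : 1 / (3 * (2 * y + 1) ^ 2) + 1 / (5 * (2 * y + 1) ^ 4) =
      (20 * t + 8) / (15 * (4 * t + 1) ^ 2) := by
    have : (2 * y + 1) ^ 2 = 4 * t + 1 := by rw [ht]; ring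
    rw [show (2 * y + 1) ^ 4 = ((2 * y + 1) ^ 2) ^ 2 by ring, this]
    field_simp; ring
  have gap : (20 * t + 8) / (15 * (4 * t + 1) ^ 2) - (30 * t ^ 2 - 3 * t - 1) / (360 * t ^ 3) =
      (10 * t + 1) * (t + 1) / (360 * t ^ 3 * (4 * t + 1) ^ 2) := by
    field_simp; ring
  rw [lhs_eq, rhs_eq, ← sub_nonneg, gap]
  positivity

section Limit

lemma tendsto_log_factorial_sub_stirling :
    Tendsto (fun n : ℕ => log (n ! : ℝ) -
      ((n + 1 / 2) * log n - n + (1 / 2) * log (2 * π))) atTop (𝓝 0) := by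
  have h : Tendsto (fun n => log (Stirling.stirlingSeq n) - log √π) atTop (𝓝 0) := by
    simpa using (Stirling.tendsto_stirlingSeq_sqrt_pi.log (by positivity)).sub_const (log √π)
  refine h.congr' ?_
  filter_upwards [eventually_ne_atTop 0] with n hn
  have hn' : (n : ℝ) ≠ 0 := Nat.cast_ne_zero.2 hn
  rw [Stirling.log_stirlingSeq_formula, log_sqrt pi_pos.le, log_mul two_ne_zero hn',
    log_mul two_ne_zero pi_ne_zero, log_div hn' (exp_ne_zero 1), log_exp]
  ring

variable {x : ℝ}

lemma log_Gamma_add_one (hx : 0 < x) : log (Gamma (x + 1)) = log (Gamma x) + log x := by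
  rw [Gamma_add_one hx.ne', log_mul hx.ne' (Gamma_pos_of_pos hx).ne', add_comm]

lemma tendsto_log_Gamma_add_sub_log_factorial (hx : 0 < x) :
    Tendsto (fun n : ℕ => log (Gamma (x + (n + 1 : ℕ))) - (x * log n + log (n ! : ℝ)))
      atTop (𝓝 0) := by
  have h := (BohrMollerup.tendsto_log_gamma hx).const_sub (log (Gamma x))
  rw [sub_self] at h
  refine h.congr fun n => ?_
  rw [BohrMollerup.f_add_nat_eq (f := fun z => log (Gamma z)) log_Gamma_add_one hx,
    BohrMollerup.logGammaSeq]
  ring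

lemma tendsto_add_mul_log_one_add_div (a b : ℝ) :
    Tendsto (fun n : ℕ => (n + b) * log (1 + a / n)) atTop (𝓝 a) := by
  have hmul : Tendsto (fun n : ℕ => n * log (1 + a / n)) atTop (𝓝 a) :=
    (tendsto_mul_log_one_add_div_atTop a).comp tendsto_natCast_atTop_atTop
  have hlog : Tendsto (fun n : ℕ => log (1 + a / n)) atTop (𝓝 0) := by
    simpa using ((tendsto_const_div_atTop_nhds_zero_nat a).const_add 1).log (by norm_num)
  simpa only [add_mul, mul_zero, add_zero] using hmul.add (hlog.const_mul b)

lemma tendsto_stirlingRemainder_add_natCast (hx : 0 < x) :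
    Tendsto (fun n : ℕ => stirlingRemainder (x + n)) atTop (𝓝 0) := by
  rw [← tendsto_add_atTop_iff_nat 1]
  have h := ((tendsto_log_Gamma_add_sub_log_factorial hx).add
    tendsto_log_factorial_sub_stirling).sub
    ((tendsto_add_mul_log_one_add_div (x + 1) (x + 1 / 2)).sub_const (x + 1))
  rw [sub_self, add_zero, sub_zero] at h
  refine h.congr' ?_
  filter_upwards [eventually_gt_atTop 0] with n hn
  have hn' : (0 : ℝ) < n := Nat.cast_pos.2 hn
  have hlog : log (1 + (x + 1) / n) = log (x + (n + 1 : ℕ)) - log n := by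
    rw [← log_div (by positivity) hn'.ne']
    congr 1
    push_cast
    field_simp
    ring
  rw [hlog, stirlingRemainder]
  push_cast
  ring

end Limit

section Bounds

variable {y : ℝ}

lemma stirlingRemainder_sub_stirlingRemainder_add_one (hy : 0 < y) :
    stirlingRemainder y - stirlingRemainder (y + 1) = (y + 1 / 2) * log (1 + y⁻¹) - 1 := by
  have hlog : log (1 + y⁻¹) = log (y + 1) - log y := by
    rw [← log_div (by positivity) hy.ne', add_div, div_self hy.ne', one_div]
  rw [stirlingRemainder, stirlingRemainder, log_Gamma_add_one hy, hlog]
  ring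

lemma stirlingRemainder_le (hy : 0 < y) : stirlingRemainder y ≤ 1 / (12 * y) := by
  suffices 0 ≤ 1 / (12 * y) - stirlingRemainder y from sub_nonneg.1 this
  refine le_of_add_one_le_of_tendsto_add_natCast
    (f := fun z => 1 / (12 * z) - stirlingRemainder z) (fun x hx => ?_) ?_
  · have hx : 0 < x := hy.trans_le hx
    have telescope : 1 / (12 * x * (x + 1)) = 1 / (12 * x) - 1 / (12 * (x + 1)) := by
      field_simp; ring
    linarith [stirlingRemainder_sub_stirlingRemainder_add_one hx,
      add_half_mul_log_one_add_inv_le hx]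
  · simpa using (tendsto_one_div_const_mul_add_natCast_pow (c := 12) (by norm_num) y
      one_ne_zero).sub (tendsto_stirlingRemainder_add_natCast hy)

lemma le_stirlingRemainder (hy : 0 < y) :
    1 / (12 * y) - 1 / (360 * y ^ 3) ≤ stirlingRemainder y := by
  suffices 0 ≤ stirlingRemainder y - (1 / (12 * y) - 1 / (360 * y ^ 3)) from sub_nonneg.1 this
  refine le_of_add_one_le_of_tendsto_add_natCast
    (f := fun z => stirlingRemainder z - (1 / (12 * z) - 1 / (360 * z ^ 3))) (fun x hx => ?_) ?_
  · have hx : 0 < x := hy.trans_le hx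
    linarith [stirlingRemainder_sub_stirlingRemainder_add_one hx,
      le_add_half_mul_log_one_add_inv hx, one_div_sub_one_div_cube_decrement_le hx]
  · have hlin := tendsto_one_div_const_mul_add_natCast_pow (c := 12) (by norm_num) y one_ne_zero
    have hcub := tendsto_one_div_const_mul_add_natCast_pow (c := 360) (by norm_num) y three_ne_zero
    simpa using (tendsto_stirlingRemainder_add_natCast hy).sub (hlin.sub hcub)

lemma abs_stirlingRemainder_sub_le (hy : 0 < y) :
    |stirlingRemainder y - 1 / (12 * y)| ≤ 1 / (360 * y ^ 3) := by
  have : 0 ≤ 1 / (360 * y ^ 3) := by positivity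
  rw [abs_le]
  constructor <;> linarith [le_stirlingRemainder hy, stirlingRemainder_le hy]

end Bounds

theorem stirling_series_first_order :
    ∃ C > (0 : ℝ), ∃ Y₀ > (0 : ℝ), ∀ y : ℝ, Y₀ ≤ y →
      |Real.log (Real.Gamma y) -
          ((y - 1 / 2) * Real.log y - y + (1 / 2) * Real.log (2 * Real.pi)) -
        1 / (12 * y)| ≤ C / y ^ 2 := by
  refine ⟨1 / 360, by norm_num, 1, one_pos, fun y hy => ?_⟩
  have hy₀ : 0 < y := one_pos.trans_le hy
  calc |stirlingRemainder y - 1 / (12 * y)|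
      ≤ 1 / (360 * y ^ 3) := abs_stirlingRemainder_sub_le hy₀
    _ ≤ 1 / (360 * y ^ 2) := by gcongr; norm_num
    _ = 1 / 360 / y ^ 2 := by rw [div_div]
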